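/- Let $\phi: \mathbb{D} \to \mathbb{C}$ be a univalent holomorphic map on the unit disk, and let $D \subseteq \mathbb{D}$ be an open disk centered at $z$ with $\overline{D} \subseteq \mathbb{D}$. Then $\phi(D)$ contains the open disk centered at $\phi(z)$ of radius $\frac{1}{4} \, \mathrm{radius}(D) \, |\phi'(z)|$. -/

import Mathlib

open Metric

/-- pointwise lower bound -/
lemma koebe_pointwise (b z t : ℂ) (r : ℝ) (hr : 0 < r) (hz : ‖z‖ = r) :
    (r ^ 4)⁻¹ + ‖b‖ ^ 2 +
      (-2 * b * z ^ 2 / (r : ℂ) ^ 4 - 2 * z ^ 3 * t / (r : ℂ) ^ 4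
        + 2 * (starRingEnd ℂ) b * z * t).re
      ≤ ‖-(z ^ 2)⁻¹ + b + z * t‖ ^ 2 := by
  have hz0 : z ≠ 0 := by
    rintro rfl; simp at hz; linarith
  have hrc : (r : ℂ) ≠ 0 := by exact_mod_cast hr.ne'
  have hinv : (z ^ 2)⁻¹ = (starRingEnd ℂ) (z ^ 2) / (r : ℂ) ^ 4 := by
    have h1 : z * (starRingEnd ℂ) z = (r : ℂ) ^ 2 := by
      rw [Complex.mul_conj, Complex.normSq_eq_norm_sq, hz]; push_cast; ring
    rw [map_pow]
    field_simp
    rw [← mul_pow, h1]; ring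
  have h2 : ‖z ^ 2‖ = r ^ 2 := by rw [norm_pow, hz]
  have h2' : (z ^ 2).re ^ 2 + (z ^ 2).im ^ 2 = r ^ 4 := by
    have := Complex.normSq_eq_norm_sq (z ^ 2)
    rw [h2, Complex.normSq_apply] at this
    nlinarith
  rw [hinv]
  have e1 : -2 * b * z ^ 2 / (r : ℂ) ^ 4 - 2 * z ^ 3 * t / (r : ℂ) ^ 4
        + 2 * (starRingEnd ℂ) b * z * t
      = (((r ^ 4)⁻¹ : ℝ) : ℂ) * (-2 * b * z ^ 2 - 2 * z ^ 2 * (z * t))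
        + 2 * (starRingEnd ℂ) b * (z * t) := by
    push_cast; field_simp
  have e2 : (starRingEnd ℂ) (z ^ 2) / (r : ℂ) ^ 4
      = (((r ^ 4)⁻¹ : ℝ) : ℂ) * (starRingEnd ℂ) (z ^ 2) := by
    push_cast; field_simp
  rw [e1, e2]
  have hR : (r ^ 4)⁻¹ * r ^ 4 = 1 := by field_simp
  generalize (r ^ 4)⁻¹ = R at *
  generalize z * t = y at *
  generalize z ^ 2 = x at *
  rw [← Complex.normSq_eq_norm_sq, ← Complex.normSq_eq_norm_sq, Complex.normSq_apply,
    Complex.normSq_apply]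
  simp
  have : R = R ^ 2 * (x.re ^ 2 + x.im ^ 2) := by rw [h2']; linear_combination -R * hR
  nlinarith [sq_nonneg y.re, sq_nonneg y.im]

lemma koebe_circle (b : ℂ) (t : ℂ → ℂ) (ht : DifferentiableOn ℂ t (ball 0 1)) (r : ℝ)
    (hr : 0 < r) (hr1 : r < 1) :
    2 * Real.pi * ((r ^ 4)⁻¹ + ‖b‖ ^ 2) ≤
      ∫ θ in (-Real.pi)..Real.pi,
        ‖-((circleMap 0 r θ) ^ 2)⁻¹ + b + circleMap 0 r θ * t (circleMap 0 r θ)‖ ^ 2 := by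
  set G : ℂ → ℝ := fun z => ‖-(z ^ 2)⁻¹ + b + z * t z‖ ^ 2 with hG
  set H : ℂ → ℂ := fun z => -2 * b * z ^ 2 / (r : ℂ) ^ 4 - 2 * z ^ 3 * t z / (r : ℂ) ^ 4
        + 2 * (starRingEnd ℂ) b * z * t z with hH
  have hcb : closedBall (0 : ℂ) r ⊆ ball 0 1 := closedBall_subset_ball hr1
  have hHd : DifferentiableOn ℂ H (ball 0 1) := by
    intro z hz
    have := ht z hz
    simp only [hH]
    fun_prop
  have hHc : ContinuousOn H (closedBall 0 r) := hHd.continuousOn.mono hcb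
  have hav : Real.circleAverage H 0 r = H 0 := by
    apply DiffContOnCl.circleAverage
    rw [abs_of_pos hr]
    exact (hHd.mono (closure_ball_subset_closedBall.trans hcb)).diffContOnCl
  have hHi : CircleIntegrable H 0 r :=
    (hHc.mono sphere_subset_closedBall).circleIntegrable hr.le
  have hre : Real.circleAverage (fun z => (H z).re) 0 r = 0 := by
    have := Complex.reCLM.circleAverage_comp_comm hHi
    rw [hav] at this
    simpa [hH, Function.comp_def] using this
  have hreC : ContinuousOn (fun z => (H z).re) (sphere 0 r) :=
    Complex.continuous_re.comp_continuousOn (hHc.mono sphere_subset_closedBall)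
  have hreI : CircleIntegrable (fun z => (H z).re) 0 r := hreC.circleIntegrable hr.le
  have htC : ContinuousOn t (sphere 0 r) :=
    ht.continuousOn.mono (sphere_subset_closedBall.trans hcb)
  have hGI : CircleIntegrable G 0 r := by
    apply ContinuousOn.circleIntegrable hr.le
    have : ∀ z ∈ sphere (0 : ℂ) r, z ^ 2 ≠ 0 := by
      intro z hz
      apply pow_ne_zero
      rintro rfl
      simp at hz; linarith
    simp only [hG]
    fun_prop (disch := assumption)
  have h1 : Real.circleAverage (fun z => ((r ^ 4)⁻¹ + ‖b‖ ^ 2) + (H z).re) 0 r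
      ≤ Real.circleAverage G 0 r := by
    apply Real.circleAverage_mono _ hGI
    · intro z hz
      rw [abs_of_pos hr] at hz
      exact koebe_pointwise b z (t z) r hr (by simpa using hz)
    · exact (continuousOn_const.add hreC).circleIntegrable hr.le
  rw [Real.circleAverage_fun_add (circleIntegrable_const _ _ _) hreI, hre,
    Real.circleAverage_const, Real.circleAverage_eq_integral_add (-Real.pi),
    intervalIntegral.integral_comp_add_right (fun θ ↦ G (circleMap 0 r θ))] at h1
  have e : 2 * Real.pi + -Real.pi = Real.pi := by ring
  rw [e, zero_add, smul_eq_mul, add_zero, inv_mul_eq_div, le_div_iff₀ (by positivity)] at h1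
  linarith

lemma koebe_annulus (b : ℂ) (t : ℂ → ℂ) (ht : DifferentiableOn ℂ t (ball 0 1)) (ρ σ : ℝ)
    (hρ : 0 < ρ) (hρσ : ρ < σ) (hσ : σ < 1) :
    Real.pi * ((ρ ^ 2)⁻¹ - (σ ^ 2)⁻¹) + Real.pi * ‖b‖ ^ 2 * (σ ^ 2 - ρ ^ 2) ≤
      ∫ z in {z : ℂ | ‖z‖ ∈ Set.Ioo ρ σ}, ‖-(z ^ 2)⁻¹ + b + z * t z‖ ^ 2 := by
  set G : ℂ → ℝ := fun z => ‖-(z ^ 2)⁻¹ + b + z * t z‖ ^ 2 with hG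
  have hA : MeasurableSet {z : ℂ | ‖z‖ ∈ Set.Ioo ρ σ} :=
    measurableSet_Ioo.preimage measurable_norm
  rw [← MeasureTheory.integral_indicator hA, ← Complex.integral_comp_polarCoord_symm]
  set S := Set.Ioo ρ σ ×ˢ Set.Ioo (-Real.pi) Real.pi with hS
  have hSm : MeasurableSet S := measurableSet_Ioo.prod measurableSet_Ioo
  have hST : S ⊆ polarCoord.target := by
    rintro ⟨x, y⟩ ⟨hx, hy⟩
    exact ⟨hρ.trans hx.1, hy⟩
  have hcm : ∀ p : ℝ × ℝ, Complex.polarCoord.symm p = circleMap 0 p.1 p.2 := by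
    intro p
    simp [circleMap, Complex.exp_mul_I]
  have e1 : ∫ p in polarCoord.target,
      p.1 • ({z : ℂ | ‖z‖ ∈ Set.Ioo ρ σ}.indicator G (Complex.polarCoord.symm p))
      = ∫ p in S, p.1 * G (circleMap 0 p.1 p.2) := by
    rw [MeasureTheory.setIntegral_eq_of_subset_of_forall_sdiff_eq_zero
      polarCoord.open_target.measurableSet hST]
    · apply MeasureTheory.setIntegral_congr_fun hSm
      rintro ⟨x, y⟩ ⟨hx, hy⟩
      have hx0 : 0 < x := hρ.trans hx.1
      simp only [hcm, smul_eq_mul]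
      rw [Set.indicator_of_mem]
      simpa [abs_of_pos hx0] using hx
    · rintro ⟨x, y⟩ ⟨⟨hx, hy⟩, hn⟩
      have hx0 : 0 < x := hx
      rw [Set.indicator_of_notMem, smul_zero]
      intro h
      apply hn
      simp only [hcm] at h
      exact ⟨by simpa [abs_of_pos hx0] using h, hy⟩
  rw [e1]
  have hcont : ContinuousOn (fun p : ℝ × ℝ => p.1 * G (circleMap 0 p.1 p.2))
      (Set.Icc ρ σ ×ˢ Set.Icc (-Real.pi) Real.pi) := by
    have hc : Continuous (fun p : ℝ × ℝ => circleMap 0 p.1 p.2) := by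
      unfold circleMap; fun_prop
    have hmaps : Set.MapsTo (fun p : ℝ × ℝ => circleMap 0 p.1 p.2)
        (Set.Icc ρ σ ×ˢ Set.Icc (-Real.pi) Real.pi) (ball 0 1) := by
      rintro ⟨x, y⟩ ⟨hx, hy⟩
      have : 0 ≤ x := hρ.le.trans hx.1
      simp [abs_of_nonneg this]
      exact hx.2.trans_lt hσ
    have htc := ht.continuousOn.comp hc.continuousOn hmaps
    simp only [Function.comp_def] at htc
    have hne : ∀ p ∈ (Set.Icc ρ σ ×ˢ Set.Icc (-Real.pi) Real.pi),
        (circleMap 0 p.1 p.2) ^ 2 ≠ 0 := by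
      rintro ⟨x, y⟩ ⟨hx, hy⟩
      have : 0 < x := hρ.trans_le hx.1
      simp [circleMap, this.ne']
    have hc' := hc.continuousOn (s := Set.Icc ρ σ ×ˢ Set.Icc (-Real.pi) Real.pi)
    simp only [hG]
    exact continuous_fst.continuousOn.mul
      (((((hc'.pow 2).inv₀ hne).neg.add continuousOn_const).add (hc'.mul htc)).norm.pow 2)
  have hint : MeasureTheory.IntegrableOn (fun p : ℝ × ℝ => p.1 * G (circleMap 0 p.1 p.2)) S
      (MeasureTheory.volume.prod MeasureTheory.volume) := by
    have := hcont.integrableOn_compact (μ := MeasureTheory.volume.prod MeasureTheory.volume)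
      (isCompact_Icc.prod isCompact_Icc)
    exact this.mono_set (Set.prod_mono Set.Ioo_subset_Icc_self Set.Ioo_subset_Icc_self)
  rw [MeasureTheory.Measure.volume_eq_prod, MeasureTheory.setIntegral_prod _ hint]
  have hint2 : MeasureTheory.IntegrableOn (fun x : ℝ => ∫ y in Set.Ioo (-Real.pi) Real.pi,
      x * G (circleMap 0 x y)) (Set.Ioo ρ σ) := by
    unfold MeasureTheory.IntegrableOn at hint
    rw [hS, ← MeasureTheory.Measure.prod_restrict] at hint
    exact hint.integral_prod_left
  have hlow : MeasureTheory.IntegrableOn (fun x : ℝ => 2 * Real.pi * ((x ^ 3)⁻¹ + ‖b‖ ^ 2 * x))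
      (Set.Ioo ρ σ) := by
    have : ContinuousOn (fun x : ℝ => 2 * Real.pi * ((x ^ 3)⁻¹ + ‖b‖ ^ 2 * x)) (Set.Icc ρ σ) := by
      have : ∀ x ∈ Set.Icc ρ σ, x ^ 3 ≠ 0 := fun x hx => (pow_pos (hρ.trans_le hx.1) 3).ne'
      fun_prop (disch := assumption)
    exact (this.integrableOn_compact isCompact_Icc).mono_set Set.Ioo_subset_Icc_self
  have hmono := MeasureTheory.setIntegral_mono_on hlow hint2 measurableSet_Ioo (by
    intro x hx
    have hx0 : 0 < x := hρ.trans hx.1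
    have := koebe_circle b t ht x hx0 (hx.2.trans hσ)
    rw [intervalIntegral.integral_of_le (by linarith [Real.pi_pos]),
      MeasureTheory.integral_Ioc_eq_integral_Ioo] at this
    rw [MeasureTheory.integral_const_mul]
    refine le_trans (le_of_eq ?_) (mul_le_mul_of_nonneg_left this hx0.le)
    field_simp)
  refine le_trans (le_of_eq ?_) hmono
  rw [← MeasureTheory.integral_Ioc_eq_integral_Ioo, ← intervalIntegral.integral_of_le hρσ.le]
  have hd : ∀ x ∈ Set.uIcc ρ σ, HasDerivAt
      (fun x : ℝ => Real.pi * (-(x ^ 2)⁻¹ + ‖b‖ ^ 2 * x ^ 2))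
      (2 * Real.pi * ((x ^ 3)⁻¹ + ‖b‖ ^ 2 * x)) x := by
    intro x hx
    rw [Set.uIcc_of_le hρσ.le] at hx
    have hx0 : 0 < x := hρ.trans_le hx.1
    have h1 := (hasDerivAt_pow 2 x).inv (by positivity)
    have h2 := ((h1.neg.add ((hasDerivAt_pow 2 x).const_mul (‖b‖ ^ 2))).const_mul Real.pi)
    convert! h2 using 1
    field_simp
    ring
  rw [intervalIntegral.integral_eq_sub_of_hasDerivAt hd]
  · ring
  · rw [intervalIntegrable_iff_integrableOn_Ioo_of_le hρσ.le]
    exact hlow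

/-- The real-linear map `w ↦ w - c * conj w`. -/
noncomputable def koebeM (c : ℂ) : ℂ →ₗ[ℝ] ℂ where
  toFun w := w - c * (starRingEnd ℂ) w
  map_add' x y := by simp; ring
  map_smul' r x := by simp; ring

lemma koebeM_apply (c w : ℂ) : koebeM c w = w - c * (starRingEnd ℂ) w := rfl

lemma koebeM_det (c : ℂ) : LinearMap.det (koebeM c) = 1 - ‖c‖ ^ 2 := by
  rw [← LinearMap.det_toMatrix Complex.basisOneI, Matrix.det_fin_two,
    ← Complex.normSq_eq_norm_sq, Complex.normSq_apply]
  simp [LinearMap.toMatrix_apply, koebeM_apply]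
  ring

lemma koebe_ellipse_volume (c : ℂ) (hc : ‖c‖ < 1) (R : ℝ) (hR : 0 ≤ R) :
    MeasureTheory.volume (koebeM c ⁻¹' closedBall 0 R)
      = ENNReal.ofReal (Real.pi * R ^ 2 / (1 - ‖c‖ ^ 2)) := by
  have hpos : 0 < 1 - ‖c‖ ^ 2 := by nlinarith [norm_nonneg c]
  rw [MeasureTheory.Measure.addHaar_preimage_linearMap _ (by rw [koebeM_det]; exact hpos.ne'),
    koebeM_det, Complex.volume_closedBall, abs_of_pos (inv_pos.2 hpos), ← ENNReal.ofReal_pow hR,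
    show ((NNReal.pi : NNReal) : ENNReal) = ENNReal.ofReal Real.pi by
      rw [← NNReal.coe_real_pi, ENNReal.ofReal_coe_nnreal],
    ← ENNReal.ofReal_mul (by positivity), ← ENNReal.ofReal_mul (by positivity)]
  congr 1
  field_simp

lemma koebe_area_formula (g g' : ℂ → ℂ) (A : Set ℂ) (hA : MeasurableSet A)
    (hg : ∀ z ∈ A, HasDerivAt g (g' z) z) (hinj : Set.InjOn g A) :
    MeasureTheory.volume.real (g '' A) = ∫ z in A, ‖g' z‖ ^ 2 := by
  have h := MeasureTheory.integral_image_eq_integral_abs_det_fderiv_smul MeasureTheory.volume hA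
    (f := g) (f' := fun z => (ContinuousLinearMap.toSpanSingleton ℂ (g' z)).restrictScalars ℝ)
    (fun z hz => ((hg z hz).hasFDerivAt.restrictScalars ℝ).hasFDerivWithinAt) hinj
    (fun _ => (1 : ℝ))
  simp only [MeasureTheory.integral_const, smul_eq_mul, mul_one,
    MeasureTheory.measureReal_restrict_apply_univ] at h
  rw [h]
  congr 1
  ext z
  have : ((ContinuousLinearMap.toSpanSingleton ℂ (g' z)).restrictScalars ℝ).det
      = ‖g' z‖ ^ 2 := by
    rw [ContinuousLinearMap.det, ← LinearMap.det_toMatrix Complex.basisOneI, Matrix.det_fin_two,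
      ← Complex.normSq_eq_norm_sq, Complex.normSq_apply]
    simp [LinearMap.toMatrix_apply]
  rw [this, abs_of_nonneg (by positivity)]

/-- Image of the outer part of the disc stays inside the ellipse. -/
lemma koebe_inside (F : ℂ → ℂ) (hF : DifferentiableOn ℂ F (ball 0 1)) (hF0 : F 0 = 0)
    (hinj : Set.InjOn F (ball 0 1)) (c : ℂ) (R ρ : ℝ) (hρ : 0 < ρ) (hρ1 : ρ < 1)
    (hb : ∀ y, ‖y‖ = ρ → ‖koebeM c (F y)⁻¹‖ ≤ R) (z : ℂ) (hz : ρ < ‖z‖) (hz1 : ‖z‖ < 1) :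
    ‖koebeM c (F z)⁻¹‖ ≤ R := by
  by_contra! hcon
  have hsub : ball (0 : ℂ) ρ ⊆ ball 0 1 := ball_subset_ball hρ1.le
  have hcsub : closedBall (0 : ℂ) ρ ⊆ ball 0 1 := closedBall_subset_ball hρ1
  have hopen : IsOpen (F '' ball 0 ρ) := by
    rcases (hF.analyticOnNhd isOpen_ball).is_constant_or_isOpen
      (convex_ball (0 : ℂ) 1).isPreconnected with ⟨w, hw⟩ | h
    · exfalso
      have h1 : z ∈ ball (0 : ℂ) 1 := by simpa using hz1
      have h0 : (0 : ℂ) ∈ ball (0 : ℂ) 1 := by simp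
      have := hinj h1 h0 ((hw z h1).trans (hw 0 h0).symm)
      subst this
      simp at hz; linarith
    · exact h _ hsub isOpen_ball
  have hclosed : IsClosed (F '' closedBall 0 ρ) :=
    ((isCompact_closedBall 0 ρ).image_of_continuousOn (hF.continuousOn.mono hcsub)).isClosed
  have hseg : segment ℝ 0 (F z) ⊆ F '' ball 0 ρ := by
    refine (convex_segment (𝕜 := ℝ) 0 (F z)).isPreconnected.subset_left_of_subset_union
      hopen hclosed.isOpen_compl ?_ ?_ ?_
    · rw [Set.disjoint_compl_right_iff_subset]
      exact Set.image_mono ball_subset_closedBall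
    · intro p hp
      by_cases h : p ∈ F '' closedBall 0 ρ
      · left
        obtain ⟨y, hy, rfl⟩ := h
        refine ⟨y, ?_, rfl⟩
        by_contra hy'
        have hyρ : ‖y‖ = ρ := le_antisymm (by simpa using hy) (by simpa using hy')
        rw [segment_eq_image] at hp
        obtain ⟨s, ⟨hs0, hs1⟩, hs⟩ := hp
        simp only [smul_zero, zero_add] at hs
        have hy0 : y ≠ 0 := by rintro rfl; simp at hyρ; linarith
        have hFy : F y ≠ 0 := by
          intro h
          exact hy0 (hinj (hcsub hy) (by simp) (h.trans hF0.symm))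
        have hs00 : s ≠ 0 := by
          rintro rfl
          simp at hs
          exact hFy hs.symm
        have hspos : 0 < s := lt_of_le_of_ne hs0 hs00.symm
        have e : (F z)⁻¹ = s • (F y)⁻¹ := by
          rw [← hs]
          have hsc : (s : ℂ) ≠ 0 := by exact_mod_cast hs00
          rw [Complex.real_smul, Complex.real_smul, mul_inv, ← mul_assoc,
            mul_inv_cancel₀ hsc, one_mul]
        rw [e, map_smul, norm_smul, Real.norm_of_nonneg hs0] at hcon
        have := hb y hyρ
        nlinarith [norm_nonneg (koebeM c (F y)⁻¹)]
      · right; exact h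
    · exact ⟨0, left_mem_segment _ _ _, 0, by simpa using hρ, hF0⟩
  obtain ⟨y, hy, hyz⟩ := hseg (right_mem_segment ℝ 0 (F z))
  have := hinj (hsub hy) (by simpa using hz1) hyz
  subst this
  simp at hy; linarith

/-- The area theorem (first coefficient). -/
lemma koebe_area (q s : ℂ → ℂ) (b : ℂ) (hs : DifferentiableOn ℂ s (ball 0 1))
    (hq : ∀ z ∈ ball (0 : ℂ) 1, q z = 1 + b * z ^ 2 + z ^ 3 * s z)
    (hq0 : ∀ z ∈ ball (0 : ℂ) 1, q z ≠ 0)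
    (hinj : Set.InjOn (fun z => z / q z) (ball 0 1)) : ‖b‖ ≤ 1 := by
  have hqd : DifferentiableOn ℂ q (ball 0 1) := by
    have : DifferentiableOn ℂ (fun z => 1 + b * z ^ 2 + z ^ 3 * s z) (ball 0 1) := by fun_prop
    exact this.congr hq
  set F : ℂ → ℂ := fun z => z / q z with hF
  have hFd : DifferentiableOn ℂ F (ball 0 1) := differentiableOn_id.div hqd hq0
  set g : ℂ → ℂ := fun z => z⁻¹ + b * z + z ^ 2 * s z with hg
  have hFg : ∀ z ∈ ball (0 : ℂ) 1, z ≠ 0 → (F z)⁻¹ = g z := by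
    intro z hz hz0
    simp only [hF, hg, inv_div, hq z hz]
    field_simp
  set t : ℂ → ℂ := fun z => 2 * s z + z * deriv s z with ht
  have htd : DifferentiableOn ℂ t (ball 0 1) := by
    have := hs.deriv isOpen_ball
    simp only [ht]
    fun_prop
  have hgd : ∀ z ∈ ball (0 : ℂ) 1, z ≠ 0 → HasDerivAt g (-(z ^ 2)⁻¹ + b + z * t z) z := by
    intro z hz hz0
    have h1 := (hs.differentiableAt (isOpen_ball.mem_nhds hz)).hasDerivAt
    have h2 := ((hasDerivAt_inv hz0).add ((hasDerivAt_id z).const_mul b)).add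
      ((hasDerivAt_pow 2 z).mul h1)
    convert! h2 using 1
    simp [ht]; ring
  have hginj : Set.InjOn g {z | z ∈ ball (0 : ℂ) 1 ∧ z ≠ 0} := by
    intro x hx y hy hxy
    rw [← hFg x hx.1 hx.2, ← hFg y hy.1 hy.2] at hxy
    exact hinj hx.1 hy.1 (inv_injective hxy)
  -- bound on s near zero
  obtain ⟨C, hC0, hC⟩ : ∃ C : ℝ, 0 ≤ C ∧ ∀ z ∈ closedBall (0 : ℂ) (1 / 2), ‖s z‖ ≤ C := by
    obtain ⟨C, hC⟩ := (isCompact_closedBall (0 : ℂ) (1 / 2)).exists_bound_of_continuousOn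
      (hs.continuousOn.mono (closedBall_subset_ball (by norm_num)))
    exact ⟨C, (norm_nonneg _).trans (hC 0 (by simp)), hC⟩
  -- the key inequality
  have key : ∀ ρ σ : ℝ, 0 < ρ → ρ ≤ 1 / 2 → ‖b‖ * ρ ^ 2 ≤ 1 / 2 → ρ < σ → σ < 1 →
      ‖b‖ ^ 2 * (σ ^ 2 - ρ ^ 2) ≤ (σ ^ 2)⁻¹ + 4 * C * ρ + 4 * C ^ 2 * ρ ^ 4 := by
    intro ρ σ hρ hρ2 hbρ hρσ hσ
    set c : ℂ := b * ρ ^ 2 with hc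
    have hcn : ‖c‖ = ‖b‖ * ρ ^ 2 := by simp [hc, abs_of_pos hρ]
    have hc2 : ‖c‖ ≤ 1 / 2 := by rw [hcn]; exact hbρ
    have hcpos : 0 < 1 - ‖c‖ ^ 2 := by nlinarith [norm_nonneg c]
    set R : ℝ := (1 - ‖c‖ ^ 2) * (ρ⁻¹ + 2 * C * ρ ^ 2) with hR
    have hR0 : 0 ≤ R := by positivity
    have hbd : ∀ y, ‖y‖ = ρ → ‖koebeM c (F y)⁻¹‖ ≤ R := by
      intro y hy
      have hy0 : y ≠ 0 := by rintro rfl; simp at hy; linarith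
      have hy1 : y ∈ ball (0 : ℂ) 1 := by simp [hy]; linarith
      rw [hFg y hy1 hy0]
      have hsy : ‖s y‖ ≤ C := hC y (by simp [hy]; linarith)
      have hyc : y * (starRingEnd ℂ) y = (ρ : ℂ) ^ 2 := by
        rw [Complex.mul_conj, Complex.normSq_eq_norm_sq, hy]; push_cast; ring
      have hconj : (starRingEnd ℂ) y⁻¹ * ρ ^ 2 = y := by
        have : (starRingEnd ℂ) y ≠ 0 := by simpa using hy0
        rw [← hyc, map_inv₀]; field_simp
      have hconj2 : (starRingEnd ℂ) y * y⁻¹ * y = ρ ^ 2 * y⁻¹ := by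
        rw [← hyc]; field_simp
      have e : koebeM c (g y) = ((1 - ‖c‖ ^ 2 : ℝ) : ℂ) * y⁻¹
          + (y ^ 2 * s y - c * (starRingEnd ℂ) (y ^ 2 * s y)) := by
        have hcc : ((‖c‖ ^ 2 : ℝ) : ℂ) = c * (starRingEnd ℂ) c := by
          rw [Complex.mul_conj, Complex.normSq_eq_norm_sq]
        rw [koebeM_apply, Complex.ofReal_sub, hcc]
        simp only [hg, map_add, map_mul]
        have h3 : c * (starRingEnd ℂ) y⁻¹ = b * y := by
          rw [hc, mul_assoc, mul_comm _ ((starRingEnd ℂ) y⁻¹), hconj]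
        have h4 : (starRingEnd ℂ) b * (starRingEnd ℂ) y = (starRingEnd ℂ) c * y⁻¹ := by
          have : (starRingEnd ℂ) y = ρ ^ 2 * y⁻¹ := by rw [← hyc]; field_simp
          rw [this, hc]; simp; ring
        rw [mul_add, mul_add, h3, h4]
        push_cast
        ring
      have hE : ‖y ^ 2 * s y‖ ≤ ρ ^ 2 * C := by
        rw [norm_mul, norm_pow, hy]; gcongr
      rw [e]
      calc _ ≤ ‖((1 - ‖c‖ ^ 2 : ℝ) : ℂ) * y⁻¹‖
            + (‖y ^ 2 * s y‖ + ‖c * (starRingEnd ℂ) (y ^ 2 * s y)‖) :=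
            (norm_add_le _ _).trans (by gcongr; exact norm_sub_le _ _)
        _ = (1 - ‖c‖ ^ 2) * ρ⁻¹ + (1 + ‖c‖) * ‖y ^ 2 * s y‖ := by
            rw [norm_mul, norm_mul c, RCLike.norm_conj, Complex.norm_real,
              Real.norm_of_nonneg hcpos.le, norm_inv, hy]; ring
        _ ≤ (1 - ‖c‖ ^ 2) * ρ⁻¹ + (1 + ‖c‖) * (ρ ^ 2 * C) := by gcongr
        _ ≤ R := by
            have h5 : 0 ≤ ρ ^ 2 * C := by positivity
            have h6 : (1 + ‖c‖) ≤ 2 * (1 - ‖c‖ ^ 2) := by nlinarith [norm_nonneg c]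
            have := mul_le_mul_of_nonneg_right h6 h5
            rw [hR]; linarith
    set A : Set ℂ := {z : ℂ | ‖z‖ ∈ Set.Ioo ρ σ} with hAdef
    have hA : MeasurableSet A := measurableSet_Ioo.preimage measurable_norm
    have hA1 : ∀ z ∈ A, z ∈ ball (0 : ℂ) 1 ∧ z ≠ 0 := by
      intro z hz
      refine ⟨by simpa using hz.2.trans hσ, ?_⟩
      rintro rfl
      have := hz.1
      simp at this; linarith
    have himg : g '' A ⊆ koebeM c ⁻¹' closedBall 0 R := by
      rintro _ ⟨z, hz, rfl⟩
      rw [← hFg z (hA1 z hz).1 (hA1 z hz).2]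
      simpa using koebe_inside F hFd (by simp [hF]) hinj c R ρ hρ (by linarith) hbd z hz.1
        (hz.2.trans hσ)
    have hvol := koebe_ellipse_volume c (by linarith) R hR0
    have harea := koebe_area_formula g _ A hA (fun z hz => hgd z (hA1 z hz).1 (hA1 z hz).2)
      (hginj.mono hA1)
    have hlow := koebe_annulus b t htd ρ σ hρ hρσ hσ
    rw [← harea] at hlow
    have hup : MeasureTheory.volume.real (g '' A) ≤ Real.pi * R ^ 2 / (1 - ‖c‖ ^ 2) := by
      refine (MeasureTheory.measureReal_mono himg (by rw [hvol]; exact ENNReal.ofReal_ne_top)).trans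
        (le_of_eq ?_)
      rw [MeasureTheory.measureReal_def, hvol, ENNReal.toReal_ofReal (by positivity)]
    have hup2 : Real.pi * R ^ 2 / (1 - ‖c‖ ^ 2) ≤ Real.pi * (ρ⁻¹ + 2 * C * ρ ^ 2) ^ 2 := by
      rw [div_le_iff₀ hcpos, hR, mul_pow, mul_assoc]
      have : (1 - ‖c‖ ^ 2) ^ 2 ≤ 1 - ‖c‖ ^ 2 := by nlinarith [sq_nonneg ‖c‖]
      nlinarith [mul_le_mul_of_nonneg_right this (sq_nonneg (ρ⁻¹ + 2 * C * ρ ^ 2)), Real.pi_pos]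
    have h7 := hlow.trans (hup.trans hup2)
    have h8 : (ρ ^ 2)⁻¹ - (σ ^ 2)⁻¹ + ‖b‖ ^ 2 * (σ ^ 2 - ρ ^ 2) ≤ (ρ⁻¹ + 2 * C * ρ ^ 2) ^ 2 := by
      apply le_of_mul_le_mul_left _ Real.pi_pos
      linarith
    have h9 : (ρ⁻¹ + 2 * C * ρ ^ 2) ^ 2 = (ρ ^ 2)⁻¹ + 4 * C * ρ + 4 * C ^ 2 * ρ ^ 4 := by
      field_simp; ring
    rw [h9] at h8
    linarith
  have key2 : ∀ σ : ℝ, 0 < σ → σ < 1 → ‖b‖ ^ 2 * σ ^ 2 ≤ (σ ^ 2)⁻¹ := by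
    intro σ hσ0 hσ
    have hL : Filter.Tendsto (fun ρ : ℝ => ‖b‖ ^ 2 * (σ ^ 2 - ρ ^ 2)) (nhdsWithin 0 (Set.Ioi 0))
        (nhds (‖b‖ ^ 2 * (σ ^ 2 - 0 ^ 2))) :=
      (Continuous.tendsto (by fun_prop) 0).mono_left nhdsWithin_le_nhds
    have hRt : Filter.Tendsto (fun ρ : ℝ => (σ ^ 2)⁻¹ + 4 * C * ρ + 4 * C ^ 2 * ρ ^ 4)
        (nhdsWithin 0 (Set.Ioi 0)) (nhds ((σ ^ 2)⁻¹ + 4 * C * 0 + 4 * C ^ 2 * 0 ^ 4)) :=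
      (Continuous.tendsto (by fun_prop) 0).mono_left nhdsWithin_le_nhds
    have h3 : Filter.Tendsto (fun ρ : ℝ => ‖b‖ * ρ ^ 2)
        (nhdsWithin 0 (Set.Ioi 0)) (nhds (‖b‖ * 0 ^ 2)) :=
      (Continuous.tendsto (by fun_prop) 0).mono_left nhdsWithin_le_nhds
    have := le_of_tendsto_of_tendsto hL hRt (by
      filter_upwards [self_mem_nhdsWithin, h3.eventually_le_const (u := 1 / 2) (by norm_num),
        Ioo_mem_nhdsGT (show (0 : ℝ) < min (1 / 2) σ by positivity)] with ρ h1 h2 h4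
      exact key ρ σ h1 (h4.2.le.trans (min_le_left _ _)) h2 (h4.2.trans_le (min_le_right _ _)) hσ)
    simpa using this
  have hfin : ‖b‖ ^ 2 * 1 ^ 2 ≤ ((1 : ℝ) ^ 2)⁻¹ := by
    have hL : Filter.Tendsto (fun σ : ℝ => ‖b‖ ^ 2 * σ ^ 2) (nhdsWithin 1 (Set.Iio 1))
        (nhds (‖b‖ ^ 2 * 1 ^ 2)) :=
      (Continuous.tendsto (by fun_prop) 1).mono_left nhdsWithin_le_nhds
    have hRt : Filter.Tendsto (fun σ : ℝ => (σ ^ 2)⁻¹) (nhdsWithin 1 (Set.Iio 1))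
        (nhds ((1 : ℝ) ^ 2)⁻¹) :=
      (((continuous_pow 2).tendsto (1 : ℝ)).inv₀ (by norm_num)).mono_left nhdsWithin_le_nhds
    refine le_of_tendsto_of_tendsto hL hRt ?_
    filter_upwards [Ioo_mem_nhdsLT (show (0 : ℝ) < 1 by norm_num)] with σ hσ
    exact key2 σ hσ.1 hσ.2
  have : ‖b‖ ^ 2 ≤ 1 := by simpa using hfin
  nlinarith [norm_nonneg b]

/-- Bieberbach's bound for the second coefficient. -/
lemma koebe_bieberbach (k : ℂ → ℂ) (hk : DifferentiableOn ℂ k (ball 0 1)) (hk0 : k 0 = 1)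
    (hinj : Set.InjOn (fun z => z * k z) (ball 0 1)) : ‖deriv k 0‖ ≤ 2 := by
  have h0 : (0 : ℂ) ∈ ball (0 : ℂ) 1 := by simp
  have hnh : ball (0 : ℂ) 1 ∈ nhds (0 : ℂ) := isOpen_ball.mem_nhds h0
  have hkne : ∀ z ∈ ball (0 : ℂ) 1, k z ≠ 0 := by
    intro z hz h
    have : z = 0 := hinj hz h0 (by simp [h])
    subst this
    rw [hk0] at h
    exact one_ne_zero h
  have hkd : ∀ z ∈ ball (0 : ℂ) 1, HasDerivAt k (deriv k z) z := fun z hz =>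
    (hk.differentiableAt (isOpen_ball.mem_nhds hz)).hasDerivAt
  obtain ⟨l, hl0, hl⟩ := (((hk.deriv isOpen_ball).div hk hkne).isExactOn_ball).with_val_at 0 0
  simp only [Pi.div_apply] at hl
  have hexp : ∀ z ∈ ball (0 : ℂ) 1, k z * Complex.exp (-l z) = 1 := by
    intro z hz
    have hd : ∀ w ∈ ball (0 : ℂ) 1, HasDerivAt (fun w => k w * Complex.exp (-l w)) 0 w := by
      intro w hw
      have h1 := (hkd w hw).mul (hl w hw).neg.cexp
      convert! h1 using 1
      have := hkne w hw
      field_simp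
      ring
    have := isOpen_ball.is_const_of_deriv_eq_zero (convex_ball (0 : ℂ) 1).isPreconnected
      (fun w hw => (hd w hw).differentiableAt.differentiableWithinAt)
      (fun w hw => (hd w hw).deriv) hz h0
    simpa [hk0, hl0] using this
  set m : ℂ → ℂ := fun w => Complex.exp (-l w / 2) with hm
  have hmd : ∀ w ∈ ball (0 : ℂ) 1, HasDerivAt m
      (Complex.exp (-l w / 2) * (-(deriv k w / k w) / 2)) w := fun w hw =>
    ((hl w hw).neg.div_const 2).cexp
  have hmD : DifferentiableOn ℂ m (ball 0 1) := fun w hw =>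
    (hmd w hw).differentiableAt.differentiableWithinAt
  set b : ℂ := -(deriv k 0) / 2 with hb
  have hm0 : m 0 = 1 := by simp [hm, hl0]
  have hm'0 : deriv m 0 = b := by
    rw [(hmd 0 h0).deriv, hl0, hk0]; simp [hb]
  have hmk : ∀ w ∈ ball (0 : ℂ) 1, k w * m w ^ 2 = 1 := by
    intro w hw
    rw [← hexp w hw, hm]
    simp only [← Complex.exp_nat_mul]
    congr 2
    push_cast; ring
  set n : ℂ → ℂ := dslope (dslope m 0) 0 with hn
  have hnD : DifferentiableOn ℂ n (ball 0 1) :=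
    (Complex.differentiableOn_dslope hnh).2 ((Complex.differentiableOn_dslope hnh).2 hmD)
  have hmn : ∀ w, m w = 1 + b * w + w ^ 2 * n w := by
    intro w
    have h1 := sub_smul_dslope m 0 w
    have h2 := sub_smul_dslope (dslope m 0) 0 w
    rw [dslope_same, hm'0] at h2
    rw [hm0] at h1
    simp only [sub_zero, smul_eq_mul] at h1 h2
    rw [hn]
    linear_combination -h1 - w * h2
  have hsq : Set.MapsTo (fun z : ℂ => z ^ 2) (ball 0 1) (ball 0 1) := by
    intro z hz
    simp only [mem_ball_zero_iff, norm_pow] at hz ⊢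
    nlinarith [norm_nonneg z]
  have hbn : ‖b‖ ≤ 1 := by
    refine koebe_area (fun z => m (z ^ 2)) (fun z => z * n (z ^ 2)) b ?_ ?_ ?_ ?_
    · exact differentiableOn_id.mul (hnD.comp (by fun_prop) hsq)
    · intro z hz
      simp only [hmn (z ^ 2)]
      ring
    · intro z hz
      exact Complex.exp_ne_zero _
    · intro x hx y hy hxy
      simp only at hxy
      have hx2 := hmk _ (hsq hx)
      have hy2 := hmk _ (hsq hy)
      have hmx : m (x ^ 2) ≠ 0 := Complex.exp_ne_zero _
      have hmy : m (y ^ 2) ≠ 0 := Complex.exp_ne_zero _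
      have e : ∀ u, m (u ^ 2) ≠ 0 → k (u ^ 2) * m (u ^ 2) ^ 2 = 1 →
          (u / m (u ^ 2)) ^ 2 = u ^ 2 * k (u ^ 2) := by
        intro u hu h
        rw [div_pow, div_eq_iff (pow_ne_zero 2 hu)]
        linear_combination -u ^ 2 * h
      have hsq2 : x ^ 2 = y ^ 2 := by
        apply hinj (hsq hx) (hsq hy)
        simp only
        rw [← e x hmx hx2, ← e y hmy hy2, hxy]
      rw [hsq2] at hxy
      exact (div_left_inj' hmy).1 hxy
  rw [hb, norm_div, norm_neg] at hbn
  simp at hbn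
  linarith

/-- Koebe one-quarter theorem, normalised. -/
lemma koebe_quarter (k : ℂ → ℂ) (hk : DifferentiableOn ℂ k (ball 0 1)) (hk0 : k 0 = 1)
    (hinj : Set.InjOn (fun z => z * k z) (ball 0 1)) (w : ℂ) (hw : ‖w‖ < 1 / 4) :
    ∃ z ∈ ball (0 : ℂ) 1, z * k z = w := by
  by_contra! hno
  have h0 : (0 : ℂ) ∈ ball (0 : ℂ) 1 := by simp
  have hw0 : w ≠ 0 := by
    have := hno 0 h0
    simpa using this.symm
  have hne : ∀ z ∈ ball (0 : ℂ) 1, 1 - z * k z / w ≠ 0 := by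
    intro z hz h
    apply hno z hz
    field_simp at h
    linear_combination -h
  have h1 := koebe_bieberbach k hk hk0 hinj
  have hdd : DifferentiableOn ℂ (fun z => 1 - z * k z / w) (ball 0 1) := by fun_prop
  have h2 := koebe_bieberbach (fun z => k z / (1 - z * k z / w)) (hk.div hdd hne)
    (by simp [hk0]) (by
      intro x hx y hy hxy
      apply hinj hx hy
      have hx1 := hne x hx
      have hy1 := hne y hy
      simp only [← mul_div_assoc] at hxy ⊢
      rw [div_eq_div_iff hx1 hy1] at hxy
      linear_combination hxy)
  have hkd : HasDerivAt k (deriv k 0) 0 :=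
    (hk.differentiableAt (isOpen_ball.mem_nhds h0)).hasDerivAt
  have hdk : HasDerivAt (fun z => k z / (1 - z * k z / w)) (deriv k 0 + 1 / w) 0 := by
    have h3 := hkd.div ((((hasDerivAt_id (0 : ℂ)).mul hkd).div_const w).const_sub 1) (by simp)
    convert! h3 using 1
    simp [hk0]
  rw [hdk.deriv] at h2
  have h4 : ‖1 / w‖ ≤ 4 := by
    calc ‖1 / w‖ = ‖(deriv k 0 + 1 / w) - deriv k 0‖ := by congr 1; ring
      _ ≤ _ := norm_sub_le _ _
      _ ≤ 4 := by linarith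
  rw [norm_div, norm_one, div_le_iff₀ (norm_pos_iff.2 hw0)] at h4
  linarith

/-- Koebe one-quarter theorem for subdisks: if `φ` is univalent on the
unit disk and `D = ball z r` has closure contained in the unit disk, then `φ(D)`
contains the disk around `φ z` of radius `(r/4) * |φ'(z)|`. -/
theorem stmt13 (φ : ℂ → ℂ)
    (hdiff : DifferentiableOn ℂ φ (ball (0 : ℂ) 1))
    (hinj : Set.InjOn φ (ball (0 : ℂ) 1))
    (z : ℂ) (r : ℝ) (hr : 0 < r)
    (hD : closedBall z r ⊆ ball (0 : ℂ) 1) :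
    ball (φ z) (r / 4 * ‖deriv φ z‖) ⊆ φ '' ball z r := by
  intro v hv
  have hd0 : deriv φ z ≠ 0 := by
    intro h
    simp [h] at hv
  have hrc : (r : ℂ) ≠ 0 := by exact_mod_cast hr.ne'
  have hmaps : Set.MapsTo (fun u : ℂ => z + r * u) (ball 0 1) (ball z r) := by
    intro u hu
    simp only [mem_ball_iff_norm, sub_zero] at hu ⊢
    simp [abs_of_pos hr]
    nlinarith
  have hsub : ball z r ⊆ ball (0 : ℂ) 1 := ball_subset_closedBall.trans hD
  set f : ℂ → ℂ := fun u => (φ (z + r * u) - φ z) / (r * deriv φ z) with hf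
  have hfd : DifferentiableOn ℂ f (ball 0 1) := by
    have := (hdiff.mono hsub).comp (f := fun u : ℂ => z + r * u) (by fun_prop) hmaps
    exact (this.sub_const _).div_const _
  have hf0 : f 0 = 0 := by simp [hf]
  have hz : z ∈ ball (0 : ℂ) 1 := hsub (mem_ball_self hr)
  have hf'0 : deriv f 0 = 1 := by
    have h1 : HasDerivAt φ (deriv φ z) (z + r * 0) := by
      simpa using (hdiff.differentiableAt (isOpen_ball.mem_nhds hz)).hasDerivAt
    have h2 : HasDerivAt (fun u : ℂ => z + r * u) r 0 := by
      simpa using ((hasDerivAt_id (0 : ℂ)).const_mul (r : ℂ)).const_add z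
    have h3 := ((h1.comp (0 : ℂ) h2).sub_const (φ z)).div_const (r * deriv φ z)
    have h4 := h3.deriv
    simp only [Function.comp_def] at h4
    rw [hf, h4]
    field_simp
  have hfk : ∀ u, u * dslope f 0 u = f u := by
    intro u
    have := sub_smul_dslope f 0 u
    simpa [hf0] using this
  have hkd : DifferentiableOn ℂ (dslope f 0) (ball 0 1) :=
    (Complex.differentiableOn_dslope (isOpen_ball.mem_nhds (by simp))).2 hfd
  obtain ⟨u, hu, huv⟩ := koebe_quarter (dslope f 0) hkd (by rw [dslope_same, hf'0]) (by
      intro x hx y hy hxy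
      simp only [hfk] at hxy
      simp only [hf] at hxy
      have h5 := (div_left_inj' (mul_ne_zero hrc hd0)).1 hxy
      have h6 := hinj (hsub (hmaps hx)) (hsub (hmaps hy)) (sub_left_injective h5)
      exact mul_left_cancel₀ hrc (add_left_cancel h6))
    ((v - φ z) / (r * deriv φ z)) (by
      rw [mem_ball_iff_norm] at hv
      have hp : 0 < r * ‖deriv φ z‖ := mul_pos hr (norm_pos_iff.2 hd0)
      rw [norm_div, norm_mul, Complex.norm_real, Real.norm_of_nonneg hr.le, div_lt_iff₀ hp]
      linarith)
  refine ⟨z + r * u, hmaps hu, ?_⟩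
  rw [hfk] at huv
  simp only [hf] at huv
  exact sub_left_injective ((div_left_inj' (mul_ne_zero hrc hd0)).1 huv)
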